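/- arXiv:2002.09526 — 3 statements merged into one kernel-verified Lean document; each statement's English description precedes it below -/
import Mathlib

section
/- Let (Ω, μ) be a probability space, let d ≥ 1, and let P : Ω → ℝ^{d×d} be a measurable map such that, for almost every ω, P(ω) is a symmetric idempotent matrix, and suppose E[P] = (τ/d)·I_d for some real τ with 0 < τ ≤ d. Let A ∈ ℝ^{d×d} be symmetric with 0 ⪯ A ⪯ L·I_d for some L ≥ 0. Then, in the Loewner (positive semidefinite) order, E[P(ω) A P(ω)] ⪯ (τ²/d²)·A + (τ(d−τ)/d²)·L·I_d. -/
open Matrix MeasureTheory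

lemma aux_psd {Ω : Type*} [MeasurableSpace Ω] (μ : MeasureTheory.Measure Ω)
    (d : ℕ) (R : Ω → Matrix (Fin d) (Fin d) ℝ)
    (hi : ∀ i j, Integrable (fun ω => R ω i j) μ)
    (hR : ∀ᵐ ω ∂μ, (R ω).PosSemidef) :
    (Matrix.of fun i j => ∫ ω, R ω i j ∂μ).PosSemidef := by
  refine Matrix.PosSemidef.of_dotProduct_mulVec_nonneg ?_ ?_
  · ext i j
    simp only [conjTranspose_apply, of_apply, star_trivial]
    apply integral_congr_ae
    filter_upwards [hR] with ω h
    simpa using h.1.apply i j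
  · intro x
    have : star x ⬝ᵥ ((Matrix.of fun i j => ∫ ω, R ω i j ∂μ) *ᵥ x)
        = ∫ ω, star x ⬝ᵥ (R ω *ᵥ x) ∂μ := by
      simp only [dotProduct, mulVec, of_apply]
      rw [integral_finsetSum]
      · refine Finset.sum_congr rfl fun i _ => ?_
        rw [integral_const_mul, integral_finsetSum]
        · simp only [integral_mul_const]
        · intro j _
          exact (hi i j).mul_const _
      · intro i _
        exact (integrable_finsetSum _ fun j _ => (hi i j).mul_const _).const_mul _
    rw [this]
    apply integral_nonneg_of_ae
    filter_upwards [hR] with ω h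
    exact h.dotProduct_mulVec_nonneg x

lemma aux_bound {d : ℕ} (P : Matrix (Fin d) (Fin d) ℝ) (h1 : Pᵀ = P) (h2 : P * P = P)
    (i j : Fin d) : |P i j| ≤ 1 := by
  have hs : ∀ i j, P i j ^ 2 ≤ P i i := by
    intro i j
    have e : ∑ k, P i k ^ 2 = P i i := by
      conv_rhs => rw [← h2, mul_apply]
      refine Finset.sum_congr rfl fun k _ => ?_
      have : P k i = P i k := by conv_lhs => rw [← h1, transpose_apply]
      rw [this, sq]
    rw [← e]
    exact Finset.single_le_sum (f := fun k => P i k ^ 2) (fun k _ => sq_nonneg _) (Finset.mem_univ j)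
  have a := hs i i
  have b := hs i j
  rw [abs_le_one_iff_mul_self_le_one]
  nlinarith [sq_nonneg (P i i - 1)]

/-- If `P : Ω → ℝ^{d×d}` is a.e. a symmetric idempotent with entrywise
expectation `E[P] = (τ/d)·I`, and `A` is symmetric with `0 ⪯ A ⪯ L·I`, then in the Loewner
order `E[P A P] ⪯ (τ²/d²)·A + (τ(d−τ)/d²)·L·I`. -/
theorem expected_projected_matrix_loewner_bound
    {Ω : Type*} [MeasurableSpace Ω] (μ : MeasureTheory.Measure Ω) [IsProbabilityMeasure μ]
    (d : ℕ) (hd : 1 ≤ d) (P : Ω → Matrix (Fin d) (Fin d) ℝ)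
    (hmeas : ∀ i j, Measurable fun ω => P ω i j)
    (hproj : ∀ᵐ ω ∂μ, (P ω)ᵀ = P ω ∧ P ω * P ω = P ω)
    (τ : ℝ) (hτ : 0 < τ) (hτd : τ ≤ (d : ℝ))
    (hE : ∀ i j, ∫ ω, P ω i j ∂μ = (τ / d) * (1 : Matrix (Fin d) (Fin d) ℝ) i j)
    (A : Matrix (Fin d) (Fin d) ℝ) (L : ℝ) (hL : 0 ≤ L)
    (hA : A.PosSemidef) (hAL : (L • (1 : Matrix (Fin d) (Fin d) ℝ) - A).PosSemidef)
    (hint : ∀ i j, Integrable (fun ω => (P ω * A * P ω) i j) μ) :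
    ((τ ^ 2 / (d : ℝ) ^ 2) • A
        + (τ * ((d : ℝ) - τ) / (d : ℝ) ^ 2 * L) • (1 : Matrix (Fin d) (Fin d) ℝ)
        - Matrix.of fun i j => ∫ ω, (P ω * A * P ω) i j ∂μ).PosSemidef := by
  have hPi : ∀ i j, Integrable (fun ω => P ω i j) μ := by
    intro i j
    refine Integrable.of_bound (hmeas i j).aestronglyMeasurable 1 ?_
    filter_upwards [hproj] with ω h
    exact aux_bound _ h.1 h.2 i j
  set s : ℝ := τ / d with hs
  let R : Ω → Matrix (Fin d) (Fin d) ℝ := fun ω =>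
    (L * (1 - 2 * s)) • P ω + (L * s ^ 2) • (1 : Matrix (Fin d) (Fin d) ℝ)
      - P ω * A * P ω + s • (P ω * A) + s • (A * P ω) - s ^ 2 • A
  have hPA : ∀ i j, Integrable (fun ω => (P ω * A) i j) μ := by
    intro i j
    simp only [mul_apply]
    exact integrable_finsetSum _ fun k _ => (hPi i k).mul_const _
  have hAP : ∀ i j, Integrable (fun ω => (A * P ω) i j) μ := by
    intro i j
    simp only [mul_apply]
    exact integrable_finsetSum _ fun k _ => (hPi k j).const_mul _
  have ePA : ∀ i j, ∫ ω, (P ω * A) i j ∂μ = s * A i j := by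
    intro i j
    simp only [mul_apply]
    rw [integral_finsetSum _ fun k _ => (hPi i k).mul_const _]
    simp only [integral_mul_const, hE]
    simp [one_apply]
  have eAP : ∀ i j, ∫ ω, (A * P ω) i j ∂μ = s * A i j := by
    intro i j
    simp only [mul_apply]
    rw [integral_finsetSum _ fun k _ => (hPi k j).const_mul _]
    simp only [integral_const_mul, hE]
    simp [one_apply, mul_comm]
  have i1 := fun i j => ((hPi i j).const_mul (L * (1 - 2 * s))).add
    (integrable_const (μ := μ) ((L * s ^ 2) * (1 : Matrix (Fin d) (Fin d) ℝ) i j))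
  have i2 := fun i j => (i1 i j).sub (hint i j)
  have i3 := fun i j => (i2 i j).add ((hPA i j).const_mul s)
  have i4 := fun i j => (i3 i j).add ((hAP i j).const_mul s)
  have i5 := fun i j => (i4 i j).sub (integrable_const (μ := μ) (s ^ 2 * A i j))
  have hR : ∀ᵐ ω ∂μ, (R ω).PosSemidef := by
    filter_upwards [hproj] with ω h
    have := hAL.mul_mul_conjTranspose_same (P ω - s • (1 : Matrix (Fin d) (Fin d) ℝ))
    convert this using 1
    have e : (P ω - s • (1 : Matrix (Fin d) (Fin d) ℝ))ᴴ = P ω - s • 1 := by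
      rw [conjTranspose_eq_transpose_of_trivial]
      simp [h.1]
    rw [e]
    simp only [R, sub_mul, mul_sub, smul_mul_assoc, mul_smul_comm, one_mul, mul_one, h.2]
    module
  have key := aux_psd μ d R (fun i j => i5 i j) hR
  convert key using 1
  ext i j
  have hd0 : (d : ℝ) ≠ 0 := by positivity
  have : ∫ ω, R ω i j ∂μ = L * (1 - 2 * s) * (s * (1 : Matrix (Fin d) (Fin d) ℝ) i j)
      + (L * s ^ 2) * (1 : Matrix (Fin d) (Fin d) ℝ) i j - ∫ ω, (P ω * A * P ω) i j ∂μ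
      + s * (s * A i j) + s * (s * A i j) - s ^ 2 * A i j := by
    refine (integral_sub (i4 i j) (integrable_const _)).trans ?_
    rw [integral_add' (i3 i j) ((hAP i j).const_mul s),
      integral_add' (i2 i j) ((hPA i j).const_mul s), integral_sub' (i1 i j) (hint i j),
      integral_add' ((hPi i j).const_mul _) (integrable_const _)]
    simp only [integral_const_mul, hE, ePA, eAP, integral_const, probReal_univ, one_mul,
      Matrix.smul_apply, smul_eq_mul]
  simp only [of_apply, this, Matrix.sub_apply, Matrix.add_apply, Matrix.smul_apply, smul_eq_mul]
  rw [hs]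
  field_simp
  ring
end

section
/- Let d, τ, L, M, R be positive reals with τ ≤ d, and let (δ_k)_{k≥0} be a sequence of nonnegative reals such that for every k ≥ 0 and every α ∈ [0,1]: δ_{k+1} ≤ (1 − (τ/d)α)·δ_k + (τ/d)·((d−τ)/d)·(L R²/2)·α² + (τ/d)·(M R³/3)·α³. Then for every k ≥ 1: δ_k ≤ ((d−τ)/τ)·(4.5 L R²)/k + (d/τ)²·(9 M R³)/k² + δ_0 / (1 + (1/4)·((τ/d)·k)³). -/
lemma sscn_aux (t A B : ℝ) (ht : 0 < t) (hA : 0 ≤ A) (hB : 0 ≤ B)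
    (δ : ℕ → ℝ)
    (hrec : ∀ k : ℕ, ∀ α : ℝ, 0 ≤ α → α ≤ 1 →
      δ (k + 1) ≤ (1 - t * α) * δ k + t * A * α ^ 2 + t * B * α ^ 3) (k : ℕ) :
    (4 / (3 * t ^ 3) + (k : ℝ) * (k + 1) * (2 * k + 1) / 6) * δ k ≤
      4 / (3 * t ^ 3) * δ 0 + A / t * (3 * k * (k + 1) / 2) + B / t ^ 2 * (9 * k) := by
  induction k with
  | zero => simp
  | succ k ih =>
    push_cast
    have hk : (0 : ℝ) ≤ k := Nat.cast_nonneg k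
    obtain ⟨c, hc⟩ : ∃ c : ℝ, c = 4 / (3 * t ^ 3) := ⟨_, rfl⟩
    have hc0 : 0 < c := by rw [hc]; positivity
    have hct : c * t ^ 3 * 3 = 4 := by rw [hc]; field_simp
    obtain ⟨n, hn⟩ : ∃ n : ℝ, n = k + 1 := ⟨_, rfl⟩
    have hn0 : 0 < n := by linarith
    obtain ⟨S, hS⟩ : ∃ S : ℝ, S = c + n * (n + 1) * (2 * n + 1) / 6 := ⟨_, rfl⟩
    have hS3 : c + n ^ 3 / 3 ≤ S := by rw [hS]; nlinarith [sq_nonneg n]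
    have hS3' : n ^ 3 / 3 ≤ S := by linarith
    have hS0 : 0 < S := lt_of_lt_of_le (by positivity) hS3'
    have hα1 : n ^ 2 / (t * S) ≤ 1 := by
      rw [div_le_one (by positivity)]
      have h1 : t * (c + n ^ 3 / 3) ≤ t * S := mul_le_mul_of_nonneg_left hS3 ht.le
      have h2 : n ^ 2 ≤ t * (c + n ^ 3 / 3) := by
        have h3 : 0 ≤ (t * n + 1) * (t * n - 2) ^ 2 := by positivity
        have h4 : t ^ 2 * n ^ 2 ≤ t ^ 2 * (t * (c + n ^ 3 / 3)) := by nlinarith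
        exact le_of_mul_le_mul_left h4 (by positivity)
      linarith
    have h := hrec k (n ^ 2 / (t * S)) (by positivity) hα1
    have h' := mul_le_mul_of_nonneg_left h hS0.le
    have e : S * ((1 - t * (n ^ 2 / (t * S))) * δ k + t * A * (n ^ 2 / (t * S)) ^ 2
        + t * B * (n ^ 2 / (t * S)) ^ 3) =
        (S - n ^ 2) * δ k + A / t * (n ^ 4 / S) + B / t ^ 2 * (n ^ 6 / S ^ 2) := by
      field_simp
    rw [e] at h'
    have b1 : n ^ 4 / S ≤ 3 * n := by
      rw [div_le_iff₀ hS0]; nlinarith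
    have b2 : n ^ 6 / S ^ 2 ≤ 9 := by
      rw [div_le_iff₀ (by positivity)]
      have := pow_le_pow_left₀ (by positivity) hS3' 2
      nlinarith
    have c1 := mul_le_mul_of_nonneg_left b1 (by positivity : 0 ≤ A / t)
    have c2 := mul_le_mul_of_nonneg_left b2 (by positivity : 0 ≤ B / t ^ 2)
    rw [← hc] at ih ⊢
    have e2 : S - n ^ 2 = c + (k : ℝ) * (k + 1) * (2 * k + 1) / 6 := by
      rw [hS, hn]; ring
    rw [← e2] at ih
    have e3 : c + ((k : ℝ) + 1) * (k + 1 + 1) * (2 * (k + 1) + 1) / 6 = S := by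
      rw [hS, hn]
    rw [e3]
    rw [hn] at h' c1 c2 ih
    linarith

/-- Global convergence rate of SSCN for convex functions (Theorem 1),
stated for the sequence of expected optimality gaps `δ_k`: if the one-step recurrence
`δ_{k+1} ≤ (1 − (τ/d)α)δ_k + (τ/d)((d−τ)/d)(LR²/2)α² + (τ/d)(MR³/3)α³` holds for all
`α ∈ [0,1]`, then for every `k ≥ 1`,
`δ_k ≤ ((d−τ)/τ)(4.5LR²)/k + (d/τ)²(9MR³)/k² + δ₀/(1 + ¼((τ/d)k)³)`. -/
theorem sscn_global_rate_convex
    (d τ L M R : ℝ) (hd : 0 < d) (hτ : 0 < τ) (hL : 0 < L) (hM : 0 < M) (hR : 0 < R)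
    (hτd : τ ≤ d)
    (δ : ℕ → ℝ) (hδ : ∀ k, 0 ≤ δ k)
    (hrec : ∀ k : ℕ, ∀ α : ℝ, 0 ≤ α → α ≤ 1 →
      δ (k + 1) ≤ (1 - (τ / d) * α) * δ k
        + (τ / d) * ((d - τ) / d) * (L * R ^ 2 / 2) * α ^ 2
        + (τ / d) * (M * R ^ 3 / 3) * α ^ 3) :
    ∀ k : ℕ, 1 ≤ k →
      δ k ≤ ((d - τ) / τ) * (4.5 * L * R ^ 2) / k
        + (d / τ) ^ 2 * (9 * M * R ^ 3) / (k : ℝ) ^ 2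
        + δ 0 / (1 + (1 / 4) * ((τ / d) * k) ^ 3) := by

  intro k hk
  have hk0 : (0 : ℝ) < k := by exact_mod_cast hk
  have ht : 0 < τ / d := by positivity
  have hdτ : 0 ≤ d - τ := by linarith
  have key := sscn_aux (τ / d) ((d - τ) / d * (L * R ^ 2 / 2)) (M * R ^ 3 / 3) ht
    (by positivity) (by positivity) δ
    (fun k α h0 h1 => by have := hrec k α h0 h1; linarith) k
  have e1 : ((d - τ) / τ) * (4.5 * L * R ^ 2) / k
      = ((d - τ) / d * (L * R ^ 2 / 2)) / (τ / d) * (9 / k) := by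
    field_simp; norm_num; ring
  have e2 : (d / τ) ^ 2 * (9 * M * R ^ 3) / (k : ℝ) ^ 2
      = (M * R ^ 3 / 3) / (τ / d) ^ 2 * (27 / (k : ℝ) ^ 2) := by
    field_simp; norm_num
  rw [e1, e2]
  have hA : 0 ≤ ((d - τ) / d * (L * R ^ 2 / 2)) / (τ / d) := by positivity
  have hB : 0 ≤ (M * R ^ 3 / 3) / (τ / d) ^ 2 := by positivity
  have h0 := hδ 0
  generalize ((d - τ) / d * (L * R ^ 2 / 2)) / (τ / d) = A at *
  generalize (M * R ^ 3 / 3) / (τ / d) ^ 2 = B at *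
  generalize τ / d = t at *
  have e3 : δ 0 / (1 + (1 / 4) * (t * k) ^ 3)
      = 4 / (3 * t ^ 3) * δ 0 / (4 / (3 * t ^ 3) + (k : ℝ) ^ 3 / 3) := by
    field_simp
  rw [e3]
  have hc : 0 < 4 / (3 * t ^ 3) := by positivity
  generalize 4 / (3 * t ^ 3) = c at *
  generalize (k : ℝ) = n at *
  have hS : 0 < c + n * (n + 1) * (2 * n + 1) / 6 := by positivity
  have hSn : c + n ^ 3 / 3 ≤ c + n * (n + 1) * (2 * n + 1) / 6 := by nlinarith [sq_nonneg n]
  have hS1 : n * (n + 1) * (2 * n + 1) / 6 ≤ c + n * (n + 1) * (2 * n + 1) / 6 := by linarith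
  generalize c + n * (n + 1) * (2 * n + 1) / 6 = S at *
  have d1 : 3 * n * (n + 1) / 2 / S ≤ 9 / n := by
    rw [div_le_div_iff₀ hS hk0]
    nlinarith [mul_pos hk0 hk0, mul_pos (mul_pos hk0 hk0) hk0]
  have d2 : 9 * n / S ≤ 27 / n ^ 2 := by
    rw [div_le_div_iff₀ hS (by positivity)]
    nlinarith
  have d3 : c * δ 0 / S ≤ c * δ 0 / (c + n ^ 3 / 3) :=
    div_le_div_of_nonneg_left (by positivity) (by positivity) hSn
  have f1 := mul_le_mul_of_nonneg_left d1 hA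
  have f2 := mul_le_mul_of_nonneg_left d2 hB
  have f : δ k ≤ (c * δ 0 + A * (3 * n * (n + 1) / 2) + B * (9 * n)) / S := by
    rw [le_div_iff₀ hS]; linarith
  have g : (c * δ 0 + A * (3 * n * (n + 1) / 2) + B * (9 * n)) / S
     = c * δ 0 / S + A * (3 * n * (n + 1) / 2 / S) + B * (9 * n / S) := by ring
  linarith
end

section
/- Let d, τ, L, M, R, μ be positive reals with τ ≤ d, and let (δ_k)_{k≥0} be a sequence of nonnegative reals such that for every k ≥ 0 and every α ∈ [0,1]: δ_{k+1} ≤ (1 − (τ/d)α)·δ_k + (τ/d)·((d−τ)/d)·(L R²/2)·α² + (τ/d)·(M R³/3)·α³, and suppose additionally R² ≤ (2/μ)·δ_0. Then for every integer k ≥ 1 satisfying all three of: k ≥ 108·((d−τ)/τ)·(L/μ), k ≥ (d/τ)·√(108·M R/μ), and k ≥ (d/τ)·20^{1/3}, one has δ_k ≤ (1/2)·δ_0. -/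
/-- Halving step of the linear rate of SSCN for strongly convex functions
(Theorem 2): under the one-step recurrence for the expected gaps `δ_k` and the strong
convexity bound `R² ≤ (2/μ)δ₀`, every iteration count `k` satisfying the three lower bounds
`k ≥ 108((d−τ)/τ)(L/μ)`, `k ≥ (d/τ)√(108MR/μ)` and `k ≥ (d/τ)·20^(1/3)` yields
`δ_k ≤ δ₀/2`. -/
theorem sscn_halving_strongly_convex
    (d τ L M R μ : ℝ) (hd : 0 < d) (hτ : 0 < τ) (hL : 0 < L) (hM : 0 < M) (hR : 0 < R)
    (hμ : 0 < μ) (hτd : τ ≤ d)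
    (δ : ℕ → ℝ) (hδ : ∀ k, 0 ≤ δ k)
    (hrec : ∀ k : ℕ, ∀ α : ℝ, 0 ≤ α → α ≤ 1 →
      δ (k + 1) ≤ (1 - (τ / d) * α) * δ k
        + (τ / d) * ((d - τ) / d) * (L * R ^ 2 / 2) * α ^ 2
        + (τ / d) * (M * R ^ 3 / 3) * α ^ 3)
    (hR2 : R ^ 2 ≤ (2 / μ) * δ 0) :
    ∀ k : ℕ, 1 ≤ k →
      108 * ((d - τ) / τ) * (L / μ) ≤ (k : ℝ) →
      (d / τ) * Real.sqrt (108 * M * R / μ) ≤ (k : ℝ) →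
      (d / τ) * (20 : ℝ) ^ ((1 : ℝ) / 3) ≤ (k : ℝ) →
      δ k ≤ (1 / 2) * δ 0 := by
  intro k hk h1 h2 h3
  have hk0 : (0 : ℝ) < k := by exact_mod_cast hk
  have hk1 : (1 : ℝ) ≤ k := by exact_mod_cast hk
  obtain ⟨α, hα⟩ : ∃ α : ℝ, α = d / τ / k := ⟨_, rfl⟩
  have hα0 : 0 < α := by rw [hα]; positivity
  have hdτ : d / τ = α * k := by rw [hα]; field_simp
  have hpα : τ / d * α = 1 / k := by rw [hα]; field_simp
  have h20 : (1 : ℝ) ≤ (20 : ℝ) ^ ((1 : ℝ) / 3) :=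
    Real.one_le_rpow (by norm_num) (by norm_num)
  have hα1 : α ≤ 1 := by
    rw [hdτ] at h3
    have : α * k * 1 ≤ α * k * (20 : ℝ) ^ ((1 : ℝ) / 3) := by gcongr
    by_contra h
    nlinarith
  have hD : μ * R ^ 2 ≤ 2 * δ 0 := by
    have := mul_le_mul_of_nonneg_left hR2 hμ.le
    have e : μ * (2 / μ * δ 0) = 2 * δ 0 := by field_simp
    linarith
  have hA : (d - τ) / d * (L * R ^ 2 / 2) * α ≤ δ 0 / 108 := by
    have e : (d - τ) / d * (L * R ^ 2 / 2) * α
        = (108 * ((d - τ) / τ) * (L / μ)) * (μ * R ^ 2 / (216 * k)) := by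
      rw [hα]; field_simp; ring
    have : (108 * ((d - τ) / τ) * (L / μ)) * (μ * R ^ 2 / (216 * k))
        ≤ k * (μ * R ^ 2 / (216 * k)) := by gcongr
    have e2 : k * (μ * R ^ 2 / (216 * k)) = μ * R ^ 2 / 216 := by field_simp
    linarith
  have hB : (M * R ^ 3 / 3) * α ^ 2 ≤ δ 0 / 162 := by
    have hs : α * Real.sqrt (108 * M * R / μ) ≤ 1 := by
      rw [hdτ] at h2
      by_contra h
      nlinarith
    have hs2 : (α * Real.sqrt (108 * M * R / μ)) ^ 2 ≤ 1 :=
      pow_le_one₀ (by positivity) hs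
    rw [mul_pow, Real.sq_sqrt (by positivity)] at hs2
    have e : (M * R ^ 3 / 3) * α ^ 2
        = (α ^ 2 * (108 * M * R / μ)) * (μ * R ^ 2 / 324) := by
      field_simp; ring
    have : (α ^ 2 * (108 * M * R / μ)) * (μ * R ^ 2 / 324) ≤ 1 * (μ * R ^ 2 / 324) := by
      gcongr
    linarith
  have hq : (0 : ℝ) ≤ 1 - 1 / k := by
    rw [sub_nonneg, div_le_one hk0]; exact hk1
  have hstep : ∀ j, δ (j + 1) ≤ (1 - 1 / k) * δ j + 1 / k * (5 / 324 * δ 0) := by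
    intro j
    have h := hrec j α hα0.le hα1
    have e : (τ / d) * ((d - τ) / d) * (L * R ^ 2 / 2) * α ^ 2
        + (τ / d) * (M * R ^ 3 / 3) * α ^ 3
        = (τ / d * α) * ((d - τ) / d * (L * R ^ 2 / 2) * α + (M * R ^ 3 / 3) * α ^ 2) := by
      ring
    rw [add_assoc, e, hpα] at h
    refine h.trans ?_
    gcongr
    linarith
  have hind : ∀ j, δ j ≤ ((1 - 1 / (k : ℝ)) ^ j + 5 / 324) * δ 0 := by
    intro j
    induction j with
    | zero => have := hδ 0; simp only [pow_zero]; linarith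
    | succ j ih =>
      have := mul_le_mul_of_nonneg_left ih hq
      have h := hstep j
      rw [pow_succ]
      linarith
  have hexp : (1 - 1 / (k : ℝ)) ^ k ≤ Real.exp (-1) :=
    Real.one_sub_div_pow_le_exp_neg hk1
  have he : Real.exp (-1) < 0.3678794412 := Real.exp_neg_one_lt_d9
  refine (hind k).trans ?_
  have := hδ 0
  gcongr
  norm_num at he ⊢
  norm_num at hexp
  linarith
end
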